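/- Let X ∈ ES and let γ ∨ (⋀_{i∈NI}⟨A_i⟩φ_i → ⋁_{j∈PI}⟨B_j⟩ψ_j) be a standard disjunction. If ⊨_XL γ ∨ (⋀_{i∈NI}⟨A_i⟩φ_i → ⋁_{j∈PI}⟨B_j⟩ψ_j), then the X-validity-reduction-condition holds: (1) ⊨_XL γ, or (2) both of the following: (a) if D ∉ X, then there are NI' ⊆ NI and j ∈ PI such that NI' is X-neat, ⋃_{i∈NI'} A_i ⊆ B_j, and ⊨_XL ⋀_{i∈NI'}φ_i → ψ_j; (b) if D ∈ X, then there are NI' ⊆ NI and j ∈ PI such that NI' is X-neat, ⋃_{i∈NI'} A_i ⊆ B_j, and ⊨_XL ⋀_{i∈NI'}φ_i → (ψ_j ∨ ⋁_{k∈PI₀}ψ_k), where PI₀ = { j ∈ PI : B_j = AG }. -/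

import Mathlib

/-! The contrapositive is proved by building a countermodel.  Suppose `γ` is refuted at some pointed
X-model and that for every X-neat `N` and every `j` with `⋃_{i ∈ N} A_i ⊆ B_j` there is a pointed
X-model satisfying all `φ_i` (`i ∈ N`) and refuting `ψ_j` (and, if `D ∈ X`, refuting every `ψ_k`
with `B_k = AG`).

Put the witnessing models side by side and add a fresh root labelled so as to refute `γ`.  At the
root an agent either abstains or supports one index `i`, and moreover casts a vote in `Fin (m + 1)`.
A profile `τ` forms the set `formed τ` of those `i` supported by all of `A_i`; the profile is
available iff this set is X-neat, and it leads to witnesses for `formed τ` only.  If `D ∈ X`, the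
single outcome is the witness for the index `j` which is the sum of all votes (or for `j = 0` when
`formed τ` is not contained in `B_j`).

When `A_i` jointly supports `i`, all outcomes satisfy `φ_i`.  An available action of `B_j` is
extended by letting everybody outside abstain, so that only coalitions inside `B_j` are formed, and
by letting some outsider steer the sum of votes to `j`; then `ψ_j` fails at some outcome.  If there
is no outsider, `B_j = AG` and all outcomes refute `ψ_j` when `D ∈ X`, while without determinism
votes do not matter.

The models have different action sets, so the glued model uses the product of all of them together
with the root actions; `LocalMap` records that the behaviour at a state is then a pullback along a
surjection of action sets, which preserves all notions involved. -/

namespace CL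

/-- The language Φ of coalition logic over a set of agents, with atomic
propositions drawn from ℕ (a countable set). -/
inductive Formula (Agent : Type) : Type
  | top : Formula Agent
  | atom : ℕ → Formula Agent
  | neg : Formula Agent → Formula Agent
  | and : Formula Agent → Formula Agent → Formula Agent
  | coal : Set Agent → Formula Agent → Formula Agent

namespace Formula

variable {Agent : Type}

def bot : Formula Agent := neg top

def or (φ ψ : Formula Agent) : Formula Agent := neg (and (neg φ) (neg ψ))

def imp (φ ψ : Formula Agent) : Formula Agent := or (neg φ) ψ

def iff (φ ψ : Formula Agent) : Formula Agent := and (imp φ ψ) (imp ψ φ)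

end Formula

/-- The three frame properties: seriality, independence of agents, determinism.
`ES` is represented by `Set P3`, the eight subsets of {S, I, D}. -/
inductive P3 : Type
  | S | I | D
deriving DecidableEq
section
open Classical

/-- Merge of two joint actions of disjoint coalitions. -/
noncomputable def jaUnion {Agent Act : Type} {C D : Set Agent}
    (σC : C → Act) (σD : D → Act) : ↥(C ∪ D) → Act :=
  fun a =>
    if h : a.1 ∈ C then σC ⟨a.1, h⟩
    else σD ⟨a.1, ((Set.mem_union _ _ _).mp a.2).resolve_left h⟩

end

/-- A general concurrent game frame: a nonempty set of states, a nonempty set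
of actions, and an outcome function for the grand coalition.  Joint actions of
a coalition C are functions C → Act; action profiles are functions Agent → Act. -/
structure Frame (Agent : Type) where
  State : Type
  state_nonempty : Nonempty State
  Act : Type
  act_nonempty : Nonempty Act
  out : State → (Agent → Act) → Set State

namespace Frame

variable {Agent : Type} (F : Frame Agent)

/-- Outcome function for a coalition C. -/
def outC (C : Set Agent) (s : F.State) (σ : C → F.Act) : Set F.State :=
  ⋃ (τ : Agent → F.Act) (_ : ∀ a : C, τ a.1 = σ a), F.out s τ

/-- Availability function: the available joint actions of C at s. -/
def aja (C : Set Agent) (s : F.State) : Set (C → F.Act) :=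
  {σ | (F.outC C s σ).Nonempty}

def Serial : Prop := ∀ (s : F.State) (C : Set Agent), (F.aja C s).Nonempty

def Independent : Prop :=
  ∀ (s : F.State) (C D : Set Agent), C ∩ D = ∅ →
    ∀ σC ∈ F.aja C s, ∀ σD ∈ F.aja D s, jaUnion σC σD ∈ F.aja (C ∪ D) s

def Deterministic : Prop :=
  ∀ s : F.State, ∀ σ ∈ F.aja Set.univ s, ∃ t : F.State, F.outC Set.univ s σ = {t}

end Frame

/-- A general concurrent game model: a frame together with a labeling function
(atomic propositions are drawn from the countable set ℕ). -/
structure Model (Agent : Type) extends Frame Agent where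
  lab : State → Set ℕ

namespace Model

variable {Agent : Type} (M : Model Agent)

/-- Satisfaction: M, s ⊨ φ. -/
def sat : Formula Agent → M.State → Prop
  | .top, _ => True
  | .atom n, s => n ∈ M.lab s
  | .neg φ, s => ¬ sat φ s
  | .and φ ψ, s => sat φ s ∧ sat ψ s
  | .coal C φ, s => ∃ σ ∈ M.toFrame.aja C s, ∀ t ∈ M.toFrame.outC C s σ, sat φ t

/-- M is an X-model (for X ∈ ES). -/
def IsX (X : Set P3) : Prop :=
  (P3.S ∈ X → M.toFrame.Serial) ∧ (P3.I ∈ X → M.toFrame.Independent) ∧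
    (P3.D ∈ X → M.toFrame.Deterministic)

end Model

/-- φ is X-valid: φ holds at every pointed X-model. -/
def XValid {Agent : Type} (X : Set P3) (φ : Formula Agent) : Prop :=
  ∀ M : Model Agent, M.IsX X → ∀ s : M.State, M.sat φ s

/-- φ is X-satisfiable: φ holds at some pointed X-model. -/
def XSat {Agent : Type} (X : Set P3) (φ : Formula Agent) : Prop :=
  ∃ M : Model Agent, M.IsX X ∧ ∃ s : M.State, M.sat φ s

/-- φ ⊨_XL ψ : ψ holds at every pointed X-model at which φ holds. -/
def XConseq {Agent : Type} (X : Set P3) (φ ψ : Formula Agent) : Prop :=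
  ∀ M : Model Agent, M.IsX X → ∀ s : M.State, M.sat φ s → M.sat ψ s
def bigConj {Agent : Type} (l : List (Formula Agent)) : Formula Agent :=
  l.foldr Formula.and Formula.top

def bigDisj {Agent : Type} (l : List (Formula Agent)) : Formula Agent :=
  l.foldr Formula.or Formula.bot

inductive IsLiteral {Agent : Type} : Formula Agent → Prop
  | pos (n : ℕ) : IsLiteral (Formula.atom n)
  | neg (n : ℕ) : IsLiteral (Formula.neg (Formula.atom n))

/-- An elementary disjunction: a disjunction of propositional literals. -/
inductive IsElemDisj {Agent : Type} : Formula Agent → Prop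
  | lit {φ : Formula Agent} : IsLiteral φ → IsElemDisj φ
  | or {φ ψ : Formula Agent} : IsElemDisj φ → IsElemDisj ψ → IsElemDisj (φ.or ψ)

/-- An elementary conjunction: a conjunction of propositional literals. -/
inductive IsElemConj {Agent : Type} : Formula Agent → Prop
  | lit {φ : Formula Agent} : IsLiteral φ → IsElemConj φ
  | and {φ ψ : Formula Agent} : IsElemConj φ → IsElemConj ψ → IsElemConj (φ.and ψ)

/-- The data of a standard disjunction γ ∨ (⋀_{i∈NI}⟨A_i⟩φ_i → ⋁_{j∈PI}⟨B_j⟩ψ_j):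
NI is represented by `Fin n` (possibly empty) and PI by `Fin (m+1)` (nonempty);
(1) if NI ≠ ∅ then ⟨A_i⟩φ_i = ⟨∅⟩⊤ for some i ∈ NI, and (2) ⟨B_0⟩ψ_0 = ⟨AG⟩⊥. -/
structure StdDisj (Agent : Type) where
  γ : Formula Agent
  hγ : IsElemDisj γ
  n : ℕ
  m : ℕ
  A : Fin n → Set Agent
  φ : Fin n → Formula Agent
  B : Fin (m + 1) → Set Agent
  ψ : Fin (m + 1) → Formula Agent
  hNI : n ≠ 0 → ∃ i : Fin n, A i = ∅ ∧ φ i = Formula.top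
  hB0 : B 0 = Set.univ
  hψ0 : ψ 0 = Formula.bot

namespace StdDisj

variable {Agent : Type} (d : StdDisj Agent)

/-- The formula γ ∨ (⋀_{i∈NI}⟨A_i⟩φ_i → ⋁_{j∈PI}⟨B_j⟩ψ_j). -/
def toFormula : Formula Agent :=
  d.γ.or
    ((bigConj ((List.finRange d.n).map fun i => Formula.coal (d.A i) (d.φ i))).imp
      (bigDisj ((List.finRange (d.m + 1)).map fun j => Formula.coal (d.B j) (d.ψ j))))

/-- N ⊆ NI is X-neat. -/
def Neat (X : Set P3) (N : Finset (Fin d.n)) : Prop :=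
  (∀ i ∈ N, ∀ i' ∈ N, i ≠ i' → d.A i ∩ d.A i' = ∅) ∧
    (P3.S ∉ X → N.Nonempty) ∧
    (P3.I ∉ X → ∀ i ∈ N, ∀ i' ∈ N, d.A i ≠ ∅ → d.A i' ≠ ∅ → i = i')

/-- The set of basic positive indices `PI₀ = { j ∈ PI : B_j = AG }`. -/
noncomputable def PI0 : Finset (Fin (d.m + 1)) :=
  letI := Classical.decPred fun j : Fin (d.m + 1) => d.B j = Set.univ
  Finset.univ.filter fun j => d.B j = Set.univ

end StdDisj

/-! ### Propositional connectives -/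

section
variable {Agent : Type} (M : Model Agent)

theorem sat_or (φ ψ : Formula Agent) (s : M.State) :
    M.sat (φ.or ψ) s ↔ M.sat φ s ∨ M.sat ψ s := by
  simp only [Formula.or, Model.sat]; tauto

theorem sat_imp (φ ψ : Formula Agent) (s : M.State) :
    M.sat (φ.imp ψ) s ↔ (M.sat φ s → M.sat ψ s) := by
  rw [Formula.imp, sat_or]; simp only [Model.sat]; tauto

theorem sat_bigConj (l : List (Formula Agent)) (s : M.State) :
    M.sat (bigConj l) s ↔ ∀ φ ∈ l, M.sat φ s := by
  induction l with
  | nil => simp [bigConj, Model.sat]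
  | cons a l ih =>
    have : bigConj (a :: l) = a.and (bigConj l) := rfl
    rw [this]; simp [Model.sat, ih]

theorem sat_bigDisj (l : List (Formula Agent)) (s : M.State) :
    M.sat (bigDisj l) s ↔ ∃ φ ∈ l, M.sat φ s := by
  induction l with
  | nil => simp [bigDisj, Formula.bot, Model.sat]
  | cons a l ih =>
    have : bigDisj (a :: l) = a.or (bigDisj l) := rfl
    rw [this, sat_or]; simp [ih]

/-- The truth value of an elementary disjunction depends only on the label of the state. -/
theorem sat_elemDisj_congr {M' : Model Agent} {γ : Formula Agent} (hγ : IsElemDisj γ)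
    (s : M.State) (s' : M'.State) (hl : M.lab s = M'.lab s') : M.sat γ s ↔ M'.sat γ s' := by
  induction hγ with
  | lit hφ => cases hφ <;> simp [Model.sat, hl]
  | or _ _ ih1 ih2 => rw [sat_or, sat_or, ih1, ih2]

end

/-! ### Pulling back the behaviour at a single state -/

/-- Seriality of a frame at one state. -/
def SerialAt {Agent : Type} (F : Frame Agent) (s : F.State) : Prop :=
  ∀ C : Set Agent, (F.aja C s).Nonempty

/-- Independence of a frame at one state. -/
def IndependentAt {Agent : Type} (F : Frame Agent) (s : F.State) : Prop :=
  ∀ C D : Set Agent, C ∩ D = ∅ →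
    ∀ σC ∈ F.aja C s, ∀ σD ∈ F.aja D s, jaUnion σC σD ∈ F.aja (C ∪ D) s

/-- Determinism of a frame at one state. -/
def DeterministicAt {Agent : Type} (F : Frame Agent) (s : F.State) : Prop :=
  ∀ σ ∈ F.aja Set.univ s, ∃ t : F.State, F.outC Set.univ s σ = {t}

theorem mem_outC {Agent : Type} (F : Frame Agent) (C : Set Agent) (s : F.State) (σ : C → F.Act)
    (t : F.State) : t ∈ F.outC C s σ ↔ ∃ τ : Agent → F.Act, (∀ a : C, τ a.1 = σ a) ∧
      t ∈ F.out s τ := by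
  simp [Frame.outC]

/-- The game at the state `s` of `F` is the game at the state `s'` of `F'`, with actions translated
by the surjection `f` and outcomes by `g`. -/
structure LocalMap {Agent : Type} (F F' : Frame Agent) (s : F.State) (s' : F'.State)
    (f : F.Act → F'.Act) (g : F'.State → F.State) : Prop where
  surj : Function.Surjective f
  out_eq : ∀ τ, F.out s τ = g '' F'.out s' (f ∘ τ)

namespace LocalMap

variable {Agent : Type} {F F' : Frame Agent} {s : F.State} {s' : F'.State}
  {f : F.Act → F'.Act} {g : F'.State → F.State}

theorem outC_eq (H : LocalMap F F' s s' f g) (C : Set Agent) (σ : C → F.Act) :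
    F.outC C s σ = g '' F'.outC C s' (f ∘ σ) := by
  classical
  ext t
  simp only [mem_outC, Set.mem_image, H.out_eq]
  constructor
  · rintro ⟨τ, hτ, u, hu, rfl⟩
    exact ⟨u, ⟨f ∘ τ, fun a => by simp [hτ], hu⟩, rfl⟩
  · rintro ⟨u, ⟨τ, hτ, hu⟩, rfl⟩
    -- keep `σ` on `C` and lift `τ` along `f` elsewhere
    refine ⟨fun a => if h : a ∈ C then σ ⟨a, h⟩ else Function.surjInv H.surj (τ a),
      fun a => by simp, u, ?_, rfl⟩
    convert hu using 2
    funext a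
    by_cases h : a ∈ C
    · simpa [h] using (hτ ⟨a, h⟩).symm
    · simp [h, Function.surjInv_eq]

theorem mem_aja (H : LocalMap F F' s s' f g) (C : Set Agent) (σ : C → F.Act) :
    σ ∈ F.aja C s ↔ f ∘ σ ∈ F'.aja C s' := by
  simp [Frame.aja, H.outC_eq]

theorem serialAt (H : LocalMap F F' s s' f g) (h : SerialAt F' s') : SerialAt F s := by
  intro C
  obtain ⟨σ, hσ⟩ := h C
  refine ⟨Function.surjInv H.surj ∘ σ, ?_⟩
  rw [H.mem_aja]
  convert hσ
  funext a
  simp [Function.surjInv_eq]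

theorem independentAt (H : LocalMap F F' s s' f g) (h : IndependentAt F' s') :
    IndependentAt F s := by
  intro C D hCD σC hC σD hD
  rw [H.mem_aja] at *
  convert h C D hCD _ hC _ hD
  funext a
  simp only [jaUnion, Function.comp]
  split <;> rfl

theorem deterministicAt (H : LocalMap F F' s s' f g) (h : DeterministicAt F' s') :
    DeterministicAt F s := by
  intro σ hσ
  rw [H.mem_aja] at hσ
  obtain ⟨t, ht⟩ := h _ hσ
  exact ⟨g t, by rw [H.outC_eq, ht, Set.image_singleton]⟩

theorem exists_forall_iff (H : LocalMap F F' s s' f g) (C : Set Agent) (P : F.State → Prop) :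
    (∃ σ ∈ F.aja C s, ∀ t ∈ F.outC C s σ, P t) ↔
      ∃ σ ∈ F'.aja C s', ∀ t ∈ F'.outC C s' σ, P (g t) := by
  constructor
  · rintro ⟨σ, hσ, h⟩
    refine ⟨_, (H.mem_aja C σ).1 hσ, fun t ht => h _ ?_⟩
    rw [H.outC_eq]
    exact ⟨t, ht, rfl⟩
  · rintro ⟨σ, hσ, h⟩
    have e : f ∘ (Function.surjInv H.surj ∘ σ) = σ := by
      funext a
      exact Function.surjInv_eq H.surj (σ a)
    refine ⟨Function.surjInv H.surj ∘ σ, ?_, ?_⟩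
    · rw [H.mem_aja, e]; exact hσ
    · intro t ht
      rw [H.outC_eq, e] at ht
      obtain ⟨u, hu, rfl⟩ := ht
      exact h u hu

end LocalMap

/-! ### Gluing models below a new root -/

section Glue

variable {Agent ι Act₀ : Type}

/-- The outcome function of the glued model: `none` is the root, where only the first component of
an action matters; at a state of the `k`-th model only the `k`-th action component matters. -/
def glueOut (M : ι → Model Agent) (R : (Agent → Act₀) → Set (Option (Σ k, (M k).State))) :
    Option (Σ k, (M k).State) → (Agent → Act₀ × ∀ k, (M k).Act) → Set (Option (Σ k, (M k).State))
  | none, τ => R (Prod.fst ∘ τ)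
  | some ⟨k, s⟩, τ => (fun t => some ⟨k, t⟩) '' (M k).out s (fun a => (τ a).2 k)

/-- The labelling of the glued model. -/
def glueLab (M : ι → Model Agent) (L : Set ℕ) : Option (Σ k, (M k).State) → Set ℕ
  | none => L
  | some ⟨k, s⟩ => (M k).lab s

/-- The disjoint union of the models `M k` with a new root `none`, labelled `L`, at which the
profile `τ` of root actions in `Act₀` leads to the states in `R τ`. -/
abbrev glue [Nonempty Act₀] (M : ι → Model Agent)
    (R : (Agent → Act₀) → Set (Option (Σ k, (M k).State))) (L : Set ℕ) : Model Agent where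
  State := Option (Σ k, (M k).State)
  state_nonempty := ⟨none⟩
  Act := Act₀ × ∀ k, (M k).Act
  act_nonempty :=
    have : ∀ k, Nonempty (M k).Act := fun k => (M k).act_nonempty
    inferInstance
  out := glueOut M R
  lab := glueLab M L

/-- The game played at the root of `glue`, as a frame whose game is the same at all states. -/
abbrev rootFrame [Nonempty Act₀] (M : ι → Model Agent)
    (R : (Agent → Act₀) → Set (Option (Σ k, (M k).State))) : Frame Agent where
  State := Option (Σ k, (M k).State)
  state_nonempty := ⟨none⟩
  Act := Act₀
  act_nonempty := inferInstance
  out := fun _ τ => R τ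

variable [Nonempty Act₀] (M : ι → Model Agent)
  (R : (Agent → Act₀) → Set (Option (Σ k, (M k).State))) (L : Set ℕ)

theorem glue_localMap_root :
    LocalMap (glue M R L).toFrame (rootFrame M R) none none Prod.fst id where
  surj := by
    have : ∀ k, Nonempty (M k).Act := fun k => (M k).act_nonempty
    exact Prod.fst_surjective
  out_eq := fun τ => (Set.image_id _).symm

theorem glue_localMap (k : ι) (s : (M k).State) :
    LocalMap (glue M R L).toFrame (M k).toFrame (some ⟨k, s⟩) s (fun x => x.2 k)
      (fun t => some ⟨k, t⟩) where
  surj := by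
    classical
    have : ∀ k, Nonempty (M k).Act := fun k => (M k).act_nonempty
    intro x
    exact ⟨(Classical.arbitrary _, Function.update (fun k => Classical.arbitrary _) k x),
      by simp⟩
  out_eq := fun τ => rfl

theorem glue_sat (φ : Formula Agent) (k : ι) (s : (M k).State) :
    (glue M R L).sat φ (some ⟨k, s⟩ : Option (Σ k, (M k).State)) ↔ (M k).sat φ s := by
  induction φ generalizing s with
  | top => simp [Model.sat]
  | atom n => rfl
  | neg φ ih => simp only [Model.sat, ih]
  | and φ ψ ih1 ih2 => simp only [Model.sat, ih1, ih2]
  | coal C φ ih =>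
    simp only [Model.sat]
    refine ((glue_localMap M R L k s).exists_forall_iff C _).trans ?_
    simp only [ih]

theorem glue_isX (X : Set P3) (hM : ∀ k, (M k).IsX X)
    (hS : P3.S ∈ X → SerialAt (rootFrame M R) none)
    (hI : P3.I ∈ X → IndependentAt (rootFrame M R) none)
    (hD : P3.D ∈ X → DeterministicAt (rootFrame M R) none) : (glue M R L).IsX X := by
  refine ⟨fun h s => ?_, fun h s => ?_, fun h s => ?_⟩
  · rcases s with _ | ⟨k, s⟩
    · exact (glue_localMap_root M R L).serialAt (hS h)
    · exact (glue_localMap M R L k s).serialAt ((hM k).1 h s)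
  · rcases s with _ | ⟨k, s⟩
    · exact (glue_localMap_root M R L).independentAt (hI h)
    · exact (glue_localMap M R L k s).independentAt ((hM k).2.1 h s)
  · rcases s with _ | ⟨k, s⟩
    · exact (glue_localMap_root M R L).deterministicAt (hD h)
    · exact (glue_localMap M R L k s).deterministicAt ((hM k).2.2 h s)

theorem glue_sat_root_coal (C : Set Agent) (φ : Formula Agent) :
    (glue M R L).sat (.coal C φ) (none : Option (Σ k, (M k).State)) ↔
      ∃ σ ∈ (rootFrame M R).aja C none, ∀ t ∈ (rootFrame M R).outC C none σ,
        (glue M R L).sat φ t :=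
  (glue_localMap_root M R L).exists_forall_iff C _

end Glue

/-! ### The game at the root -/

section Root

variable {Agent : Type} (d : StdDisj Agent)

/-- A root action: an index to support (`none` for abstaining) together with a vote. -/
abbrev RootAct : Type := Option (Fin d.n) × Fin (d.m + 1)

open Classical in
/-- The indices `i` supported by every member of `A_i`.  It contains all `i` with `A_i = ∅`. -/
noncomputable def formed (τ : Agent → RootAct d) : Finset (Fin d.n) :=
  Finset.univ.filter fun i => ∀ a ∈ d.A i, (τ a).1 = some i

theorem mem_formed (τ : Agent → RootAct d) (i : Fin d.n) :
    i ∈ formed d τ ↔ ∀ a ∈ d.A i, (τ a).1 = some i := by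
  simp [formed]

theorem formed_disjoint (τ : Agent → RootAct d) (i i' : Fin d.n) (hi : i ∈ formed d τ)
    (hi' : i' ∈ formed d τ) (hne : i ≠ i') : d.A i ∩ d.A i' = ∅ := by
  rw [mem_formed] at hi hi'
  by_contra hcon
  obtain ⟨a, ha, ha'⟩ := Set.nonempty_iff_ne_empty.2 hcon
  exact hne (Option.some.inj ((hi a ha).symm.trans (hi' a ha')))

theorem formed_nonempty (τ : Agent → RootAct d) (hn : d.n ≠ 0) : (formed d τ).Nonempty := by
  obtain ⟨i, hi, -⟩ := d.hNI hn
  exact ⟨i, by simp [mem_formed, hi]⟩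

/-- Only the third clause of neatness can fail for one profile and hold for another. -/
theorem neat_formed_iff (X : Set P3) (τ : Agent → RootAct d) :
    d.Neat X (formed d τ) ↔ (P3.S ∉ X → d.n ≠ 0) ∧
      (P3.I ∉ X → ∀ i ∈ formed d τ, ∀ i' ∈ formed d τ, d.A i ≠ ∅ → d.A i' ≠ ∅ → i = i') := by
  constructor
  · rintro ⟨-, h2, h3⟩
    refine ⟨fun h => ?_, h3⟩
    obtain ⟨i, -⟩ := h2 h
    exact (Nat.zero_lt_of_lt i.2).ne'
  · rintro ⟨h2, h3⟩
    exact ⟨fun i hi i' hi' => formed_disjoint d τ i i' hi hi',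
      fun h => formed_nonempty d τ (h2 h), h3⟩

theorem formed_mono {C : Set Agent} {τ τ' : Agent → RootAct d}
    (hin : ∀ a ∈ C, τ' a = τ a) (hout : ∀ a ∉ C, (τ' a).1 = none) :
    formed d τ' ⊆ formed d τ ∧ (⋃ i ∈ formed d τ', d.A i) ⊆ C := by
  have key : ∀ i ∈ formed d τ', d.A i ⊆ C := by
    intro i hi a ha
    rw [mem_formed] at hi
    by_contra hC
    have := hi a ha
    simp [hout a hC] at this
  refine ⟨fun i hi => ?_, Set.iUnion₂_subset key⟩
  have hC := key i hi
  rw [mem_formed] at hi ⊢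
  intro a ha
  rw [← hin a (hC ha)]
  exact hi a ha

/-- Agents outside `C` can abstain and, if there are any, make the votes add up to any `j`. -/
theorem exists_steer [Fintype Agent] (C : Set Agent) (τ : Agent → RootAct d) (j : Fin (d.m + 1)) :
    ∃ τ' : Agent → RootAct d, (∀ a ∈ C, τ' a = τ a) ∧ (∀ a ∉ C, (τ' a).1 = none) ∧
      (C ≠ Set.univ → ∑ a, (τ' a).2 = j) := by
  classical
  by_cases hC : C = Set.univ
  · subst hC
    exact ⟨τ, by simp, by simp, by simp⟩
  · obtain ⟨b, hb⟩ := (Set.ne_univ_iff_exists_notMem C).1 hC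
    -- everybody outside `C` votes `0`, except `b`, who corrects the sum of the votes in `C`
    set v : Fin (d.m + 1) := j - ∑ a, (if a ∈ C then (τ a).2 else 0) with hv
    refine ⟨fun a => if a ∈ C then τ a else (none, if a = b then v else 0),
      fun a ha => by simp [ha], fun a ha => by simp [ha], fun _ => ?_⟩
    have e : ∀ a, (if a ∈ C then τ a else (none, if a = b then v else 0)).2 =
        (if a ∈ C then (τ a).2 else 0) + (if a = b then v else 0) := by
      intro a
      by_cases ha : a ∈ C
      · have : a ≠ b := fun h => hb (h ▸ ha)
        simp [ha, this]
      · simp [ha]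
    simp only [e, Finset.sum_add_distrib]
    simp [hv]

open Classical in
/-- The positive index selected by a profile: the sum of the votes if the formed coalitions lie
inside the corresponding `B_j`, and `0` otherwise. -/
noncomputable def elected [Fintype Agent] (τ : Agent → RootAct d) : Fin (d.m + 1) :=
  if (⋃ i ∈ formed d τ, d.A i) ⊆ d.B (∑ a, (τ a).2) then ∑ a, (τ a).2 else 0

theorem elected_subset [Fintype Agent] (τ : Agent → RootAct d) :
    (⋃ i ∈ formed d τ, d.A i) ⊆ d.B (elected d τ) := by
  unfold elected
  split_ifs with h
  · exact h
  · rw [d.hB0]; exact Set.subset_univ _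

end Root

/-- The countermodel construction: from witnesses for all neat sets and a refutation of `γ`, a
refutation of the whole standard disjunction. -/
theorem not_valid_of_witnesses {Agent : Type} [Fintype Agent] (X : Set P3) (d : StdDisj Agent)
    (hγ : ¬ XValid X d.γ)
    (hW : ∀ (N : Finset (Fin d.n)) (j : Fin (d.m + 1)), d.Neat X N → (⋃ i ∈ N, d.A i) ⊆ d.B j →
      ∃ M : Model Agent, M.IsX X ∧ ∃ s : M.State, (∀ i ∈ N, M.sat (d.φ i) s) ∧ ¬ M.sat (d.ψ j) s ∧
        (P3.D ∈ X → ∀ k, d.B k = Set.univ → ¬ M.sat (d.ψ k) s)) :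
    ¬ XValid X d.toFormula := by
  classical
  obtain ⟨M₀, -, s₀, hs₀⟩ : ∃ M : Model Agent, M.IsX X ∧ ∃ s : M.State, ¬ M.sat d.γ s := by
    simpa only [XValid, not_forall, exists_prop] using hγ
  let ι : Type := {p : Finset (Fin d.n) × Fin (d.m + 1) //
    d.Neat X p.1 ∧ (⋃ i ∈ p.1, d.A i) ⊆ d.B p.2}
  have hWit := fun p : ι => hW p.1.1 p.1.2 p.2.1 p.2.2
  choose M hM w hφ hψ hψD using hWit
  -- outcomes of a profile: witnesses for the formed set, for the elected index if `D ∈ X`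
  let R : (Agent → RootAct d) → Set (Option (Σ p, (M p).State)) := fun τ =>
    {t | ∃ p : ι, p.1.1 = formed d τ ∧ (P3.D ∈ X → p.1.2 = elected d τ) ∧ t = some ⟨p, w p⟩}
  have hR : ∀ τ, (R τ).Nonempty ↔ d.Neat X (formed d τ) := by
    intro τ
    constructor
    · rintro ⟨t, p, hp, -⟩
      exact hp ▸ p.2.1
    · intro hN
      exact ⟨_, ⟨(formed d τ, elected d τ), hN, elected_subset d τ⟩, rfl, fun _ => rfl, rfl⟩
  have haja : ∀ (C : Set Agent) (σ : C → RootAct d), σ ∈ (rootFrame M R).aja C none ↔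
      ∃ τ : Agent → RootAct d, (∀ a : C, τ a.1 = σ a) ∧ d.Neat X (formed d τ) := by
    intro C σ
    constructor
    · rintro ⟨t, ht⟩
      obtain ⟨τ, h1, h2⟩ := (mem_outC _ _ _ _ _).1 ht
      exact ⟨τ, h1, (hR τ).1 ⟨t, h2⟩⟩
    · rintro ⟨τ, h1, h2⟩
      obtain ⟨t, ht⟩ := (hR τ).2 h2
      exact ⟨t, (mem_outC _ _ _ _ _).2 ⟨τ, h1, ht⟩⟩
  let G := glue M R (M₀.lab s₀)
  have hG : G.IsX X := by
    refine glue_isX M R _ X hM ?_ ?_ ?_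
    · intro hS C
      refine ⟨fun _ => (none, 0), (haja _ _).2 ⟨fun _ => (none, 0), fun _ => rfl, ?_⟩⟩
      refine (neat_formed_iff d X _).2 ⟨fun h => absurd hS h, fun _ i hi _ _ hne => ?_⟩
      obtain ⟨a, ha⟩ := Set.nonempty_iff_ne_empty.2 hne
      have := (mem_formed d _ i).1 hi a ha
      simp at this
    · -- with `I ∈ X` either all profiles are available or none is
      intro hI C D hCD σC hC σD hD
      obtain ⟨τ, -, hτ⟩ := (haja _ _).1 hC
      refine (haja _ _).2 ⟨fun a => if h : a ∈ C ∪ D then jaUnion σC σD ⟨a, h⟩ else (none, 0),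
        fun a => dif_pos a.2, ?_⟩
      exact (neat_formed_iff d X _).2 ⟨((neat_formed_iff d X τ).1 hτ).1, fun h => absurd hI h⟩
    · intro hDX σ hσ
      obtain ⟨τ, hτ, hN⟩ := (haja _ _).1 hσ
      refine ⟨some ⟨⟨(formed d τ, elected d τ), hN, elected_subset d τ⟩, w _⟩, ?_⟩
      ext t
      refine (mem_outC _ _ _ _ _).trans (Iff.trans ?_ Set.mem_singleton_iff.symm)
      constructor
      · rintro ⟨τ', hτ', p, hp1, hp2, rfl⟩
        have e : τ' = τ := by
          funext a
          exact (hτ' ⟨a, trivial⟩).trans (hτ ⟨a, trivial⟩).symm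
        subst e
        have : p = ⟨(formed d τ', elected d τ'), hN, elected_subset d τ'⟩ :=
          Subtype.ext (Prod.ext hp1 (hp2 hDX))
        subst this
        rfl
      · rintro rfl
        exact ⟨τ, hτ, _, rfl, fun _ => rfl, rfl⟩
  intro hval
  have hroot := (sat_or G _ _ _).1 (hval G hG none)
  rw [sat_imp, sat_bigConj, sat_bigDisj] at hroot
  rcases hroot with h | h
  · exact hs₀ ((sat_elemDisj_congr G d.hγ none s₀ rfl).1 h)
  · obtain ⟨χ, hχ, hsat⟩ := h (by
      intro χ hχ
      obtain ⟨i, -, rfl⟩ := List.mem_map.1 hχ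
      refine (glue_sat_root_coal M R _ _ _).2 ⟨fun _ => (some i, 0), (haja _ _).2
        ⟨fun a => if a ∈ d.A i then (some i, 0) else (none, 0), fun a => by simp, ?_⟩, ?_⟩
      · have key : ∀ i', i' ∈ formed d (fun a => if a ∈ d.A i then (some i, 0) else (none, 0)) →
            d.A i' ≠ ∅ → i' = i := by
          intro i' hi' hne
          obtain ⟨a, ha⟩ := Set.nonempty_iff_ne_empty.2 hne
          have := (mem_formed d _ i').1 hi' a ha
          by_cases hai : a ∈ d.A i
          · simpa [hai, eq_comm] using this
          · simp [hai] at this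
        refine (neat_formed_iff d X _).2 ⟨fun _ => (Nat.zero_lt_of_lt i.2).ne', ?_⟩
        intro _ i₁ h₁ i₂ h₂ hne₁ hne₂
        exact (key i₁ h₁ hne₁).trans (key i₂ h₂ hne₂).symm
      · intro t ht
        obtain ⟨τ, hτ, p, hp, -, rfl⟩ := (mem_outC _ _ _ _ _).1 ht
        refine (glue_sat M R _ _ p (w p)).2 (hφ p i ?_)
        rw [hp, mem_formed]
        intro a ha
        exact congrArg Prod.fst (hτ ⟨a, ha⟩))
    obtain ⟨j, -, rfl⟩ := List.mem_map.1 hχ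
    obtain ⟨σ, hσ, hall⟩ := (glue_sat_root_coal M R _ _ _).1 hsat
    obtain ⟨τ, hτ, hN⟩ := (haja _ _).1 hσ
    obtain ⟨τ', hin, hout, hsum⟩ := exists_steer d (d.B j) τ j
    obtain ⟨hsub, hB⟩ := formed_mono d hin hout
    have hN' : d.Neat X (formed d τ') := by
      rw [neat_formed_iff] at hN ⊢
      exact ⟨hN.1, fun h i hi i' hi' => hN.2 h i (hsub hi) i' (hsub hi')⟩
    have hτ' : ∀ a : d.B j, τ' a.1 = σ a := fun a => (hin a.1 a.2).trans (hτ a)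
    by_cases hc : P3.D ∈ X ∧ d.B j = Set.univ
    · -- the grand coalition cannot steer, but every witness refutes its goals
      obtain ⟨t, ht⟩ := (hR τ').2 hN'
      have ht' := ht
      obtain ⟨p, -, -, rfl⟩ := ht'
      exact hψD p hc.1 j hc.2
        ((glue_sat M R _ _ p (w p)).1 (hall _ ((mem_outC _ _ _ _ _).2 ⟨τ', hτ', ht⟩)))
    · let p : ι := ⟨(formed d τ', j), hN', hB⟩
      refine hψ p ((glue_sat M R _ _ p (w p)).1 (hall _ ((mem_outC _ _ _ _ _).2
        ⟨τ', hτ', p, rfl, fun hD => ?_, rfl⟩)))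
      have hs := hsum (fun hu => hc ⟨hD, hu⟩)
      simp only [elected, hs, p, hB, if_true]

/-- Downward validity lemma: if a standard disjunction
γ ∨ (⋀_{i∈NI}⟨A_i⟩φ_i → ⋁_{j∈PI}⟨B_j⟩ψ_j) is X-valid, then its
X-validity-reduction-condition is met. -/
theorem downward_validity {Agent : Type} [Fintype Agent] (X : Set P3)
    (d : StdDisj Agent) (h : XValid X d.toFormula) :
    XValid X d.γ ∨
      ((P3.D ∉ X → ∃ (N' : Finset (Fin d.n)) (j : Fin (d.m + 1)),
          d.Neat X N' ∧ (⋃ i ∈ N', d.A i) ⊆ d.B j ∧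
          XValid X ((bigConj (N'.toList.map d.φ)).imp (d.ψ j))) ∧
        (P3.D ∈ X → ∃ (N' : Finset (Fin d.n)) (j : Fin (d.m + 1)),
          d.Neat X N' ∧ (⋃ i ∈ N', d.A i) ⊆ d.B j ∧
          XValid X ((bigConj (N'.toList.map d.φ)).imp
            ((d.ψ j).or (bigDisj (d.PI0.toList.map d.ψ)))))) := by
  by_contra hcon
  rw [not_or] at hcon
  obtain ⟨hγ, hcon⟩ := hcon
  refine not_valid_of_witnesses X d hγ ?_ h
  intro N j hN hsub
  by_cases hD : P3.D ∈ X
  · by_contra hno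
    refine hcon ⟨fun h' => absurd hD h', fun _ => ⟨N, j, hN, hsub, fun M hM s => ?_⟩⟩
    rw [sat_imp, sat_bigConj, sat_or, sat_bigDisj]
    intro hc
    by_contra hs
    rw [not_or] at hs
    refine hno ⟨M, hM, s, fun i hi => hc _ (List.mem_map.2 ⟨i, by simpa using hi, rfl⟩), hs.1,
      fun _ k hk hsat => hs.2 ⟨d.ψ k, List.mem_map.2 ⟨k, ?_, rfl⟩, hsat⟩⟩
    simp [StdDisj.PI0, hk]
  · by_contra hno
    refine hcon ⟨fun _ => ⟨N, j, hN, hsub, fun M hM s => ?_⟩, fun h' => absurd h' hD⟩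
    rw [sat_imp, sat_bigConj]
    intro hc
    by_contra hs
    exact hno ⟨M, hM, s, fun i hi => hc _ (List.mem_map.2 ⟨i, by simpa using hi, rfl⟩), hs,
      fun h' => absurd h' hD⟩


end CL
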